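/- arXiv:1210.5205 — 5 statements merged into one kernel-verified Lean document; each statement's English description precedes it below -/
import Mathlib

section
/- Let r > 0, ρ > 0 and κ ≠ 0 be real numbers. Let α > 0 be such that −α is the negative root of the quadratic Q(t) = (κ²/2)·t·(t−1) + (ρ−r)·t − ρ, i.e. Q(−α) = 0. Then R* = 1/(1+α), where R* = (1/(2r))·(−(ρ − r + κ²/2) + √((ρ − r + κ²/2)² + 2rκ²)). -/
/-! Put `b = ρ - r + κ²/2` and `x = 1/(1+α)`. Dividing `Q(-α) = 0` by `(1+α)²` gives
`r x² + b x = κ²/2`, whose roots are `(-b ± √(b² + 2rκ²))/(2r)`. Their product is negative, so the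
positive number `x` is the one with the plus sign: precisely, `2rx + b` squares to the
discriminant and is positive because `x (2rx + b) = r x² + κ²/2`. -/

/-- If `−α` (with `α > 0`) is the negative root of `Q`, then `R* = 1/(1+α)`. -/
theorem Rstar_eq_inv_one_add_alpha (r ρ κ α : ℝ) (hr : 0 < r) (hρ : 0 < ρ) (hκ : κ ≠ 0)
    (hα : 0 < α)
    (hroot : κ ^ 2 / 2 * (-α) * (-α - 1) + (ρ - r) * (-α) - ρ = 0) :
    1 / (2 * r) *
        (-(ρ - r + κ ^ 2 / 2) + Real.sqrt ((ρ - r + κ ^ 2 / 2) ^ 2 + 2 * r * κ ^ 2)) =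
      1 / (1 + α) := by
  have hx : 0 < 1 / (1 + α) := by positivity
  have hquad : r * (1 / (1 + α)) ^ 2 + (ρ - r + κ ^ 2 / 2) * (1 / (1 + α)) = κ ^ 2 / 2 := by
    field_simp
    linear_combination (-2) * hroot
  generalize 1 / (1 + α) = x at hx hquad ⊢
  generalize ρ - r + κ ^ 2 / 2 = b at hquad ⊢
  have hpos : 0 < 2 * r * x + b := by
    refine pos_of_mul_pos_right (a := x) ?_ hx.le
    have h : x * (2 * r * x + b) = r * x ^ 2 + κ ^ 2 / 2 := by linear_combination hquad
    rw [h]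
    positivity
  have hsq : b ^ 2 + 2 * r * κ ^ 2 = (2 * r * x + b) ^ 2 := by
    linear_combination (-4 * r) * hquad
  rw [hsq, Real.sqrt_sq hpos.le]
  field_simp
  ring
end

section
/- Let R > 0 with R ≠ 1, let 0 < b < 1, and let U(s) = s^{1−R}/(1−R). For every y > 0, the supremum of s ↦ U(s) − y·s over s ∈ [b,1] equals: U(1) − y if 0 < y ≤ 1; −y^{1−1/R}/(1−1/R) if 1 ≤ y ≤ b^{−R}; and U(b) − b·y if y ≥ b^{−R}. Moreover the supremum is attained at s = 1, s = y^{−1/R}, and s = b in the three cases respectively. -/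
/-!
The utility `U` is concave, so it lies below each of its tangent lines:
`U s ≤ U c + c ^ (-R) * (s - c)` (`crra_le_tangent`). Subtracting `y * s`, the objective `f` satisfies
`f s ≤ f c + (c ^ (-R) - y) * (s - c)`, so `c` is a maximizer over `[b, 1]` as soon as the last product
is nonpositive there. At `c = 1` this holds for `y ≤ 1`, at `c = b` for `b ^ (-R) ≤ y`, and at
`c = y ^ (-1/R)` the slope vanishes; this last point lies in `[b, 1]` exactly when
`1 ≤ y ≤ b ^ (-R)`.

The tangent inequality reduces by scaling to `c = 1`, where it is Bernoulli's inequality with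
exponent `1 - R < 1`.
-/

/-- Bernoulli's inequality with exponent `1 - R < 1`, `1 - R ≠ 0`; dividing by `1 - R` gives both
signs of the exponent the same form. -/
lemma crra_le_tangent_one {R t : ℝ} (hR : 0 < R) (hR1 : R ≠ 1) (ht : 0 < t) :
    t ^ (1 - R) / (1 - R) ≤ 1 / (1 - R) + (t - 1) := by
  rcases lt_or_gt_of_ne hR1 with h | h
  · have hp : 0 < 1 - R := by linarith
    have key := rpow_one_add_le_one_add_mul_self (s := t - 1) (by linarith) hp.le
      (by linarith : 1 - R ≤ 1)
    rw [show 1 + (t - 1) = t by ring] at key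
    rw [div_add' _ _ _ hp.ne', div_le_div_iff_of_pos_right hp]
    linarith
  · have hp : 1 - R < 0 := by linarith
    -- For a negative exponent `p`, use `exp (p log t) ≥ 1 + p log t ≥ 1 + p (t - 1)`.
    have key : 1 + (1 - R) * (t - 1) ≤ t ^ (1 - R) := by
      rw [Real.rpow_def_of_pos ht]
      have h1 := Real.add_one_le_exp (Real.log t * (1 - R))
      have h2 := Real.log_le_sub_one_of_pos ht
      nlinarith
    rw [div_add' _ _ _ hp.ne, div_le_div_right_of_neg hp]
    linarith

/-- Concavity of the CRRA utility: its graph lies below the tangent line at `c`. -/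
lemma crra_le_tangent {R s c : ℝ} (hR : 0 < R) (hR1 : R ≠ 1) (hs : 0 < s) (hc : 0 < c) :
    s ^ (1 - R) / (1 - R) ≤ c ^ (1 - R) / (1 - R) + c ^ (-R) * (s - c) := by
  have h := crra_le_tangent_one hR hR1 (div_pos hs hc)
  have hcp : 0 < c ^ (1 - R) := Real.rpow_pos_of_pos hc _
  have hcR : c ^ (1 - R) = c ^ (-R) * c := by
    rw [← Real.rpow_add_one hc.ne']
    ring_nf
  have h' := mul_le_mul_of_nonneg_left h hcp.le
  rw [Real.div_rpow hs.le hc.le] at h'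
  calc s ^ (1 - R) / (1 - R)
      = c ^ (1 - R) * (s ^ (1 - R) / c ^ (1 - R) / (1 - R)) := by field_simp
    _ ≤ c ^ (1 - R) * (1 / (1 - R) + (s / c - 1)) := h'
    _ = c ^ (1 - R) / (1 - R) + c ^ (1 - R) * (s / c - 1) := by ring
    _ = c ^ (1 - R) / (1 - R) + c ^ (-R) * (s - c) := by
      rw [hcR]
      field_simp

/-- First-order (variational) criterion for `c` to be a maximizer over `[b, 1]`. -/
lemma crra_isGreatest {R b y c : ℝ} (hR : 0 < R) (hR1 : R ≠ 1) (hb0 : 0 < b)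
    (hc : c ∈ Set.Icc b 1) (hslope : ∀ s ∈ Set.Icc b 1, (c ^ (-R) - y) * (s - c) ≤ 0) :
    IsGreatest ((fun s : ℝ => s ^ (1 - R) / (1 - R) - y * s) '' Set.Icc b 1)
      (c ^ (1 - R) / (1 - R) - y * c) := by
  refine ⟨⟨c, hc, rfl⟩, ?_⟩
  rintro _ ⟨s, hs, rfl⟩
  have h := crra_le_tangent hR hR1 (hb0.trans_le hs.1) (hb0.trans_le hc.1)
  have h2 := hslope s hs
  simp only
  linarith

/-- The supremum of `s ↦ U(s) − y·s` over `s ∈ [b,1]` for CRRA utility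
`U(s) = s^{1−R}/(1−R)`, together with the maximizers in each of the three regimes. -/
theorem crra_dual_sup (R b y : ℝ) (hR : 0 < R) (hR1 : R ≠ 1) (hb0 : 0 < b) (hb1 : b < 1)
    (hy : 0 < y) :
    (y ≤ 1 →
      IsGreatest ((fun s : ℝ => s ^ (1 - R) / (1 - R) - y * s) '' Set.Icc b 1)
        ((1 : ℝ) ^ (1 - R) / (1 - R) - y) ∧
      (1 : ℝ) ∈ Set.Icc b 1 ∧
      (1 : ℝ) ^ (1 - R) / (1 - R) - y * 1 = (1 : ℝ) ^ (1 - R) / (1 - R) - y) ∧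
    (1 ≤ y → y ≤ b ^ (-R) →
      IsGreatest ((fun s : ℝ => s ^ (1 - R) / (1 - R) - y * s) '' Set.Icc b 1)
        (-(y ^ (1 - 1 / R)) / (1 - 1 / R)) ∧
      y ^ (-(1 / R)) ∈ Set.Icc b 1 ∧
      (y ^ (-(1 / R))) ^ (1 - R) / (1 - R) - y * y ^ (-(1 / R)) =
        -(y ^ (1 - 1 / R)) / (1 - 1 / R)) ∧
    (b ^ (-R) ≤ y →
      IsGreatest ((fun s : ℝ => s ^ (1 - R) / (1 - R) - y * s) '' Set.Icc b 1)
        (b ^ (1 - R) / (1 - R) - b * y) ∧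
      b ∈ Set.Icc b 1 ∧
      b ^ (1 - R) / (1 - R) - y * b = b ^ (1 - R) / (1 - R) - b * y) := by
  have hmem1 : (1 : ℝ) ∈ Set.Icc b 1 := ⟨hb1.le, le_rfl⟩
  have hmemb : b ∈ Set.Icc b 1 := ⟨le_rfl, hb1.le⟩
  refine ⟨fun hy1 => ⟨?_, hmem1, by ring⟩, fun hy1 hyb => ?_, fun hyb => ⟨?_, hmemb, by ring⟩⟩
  · have h := crra_isGreatest (y := y) hR hR1 hb0 hmem1 (fun s hs => by
      rw [Real.one_rpow]
      exact mul_nonpos_of_nonneg_of_nonpos (by linarith) (by linarith [hs.2]))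
    rwa [mul_one] at h
  · have hmem : y ^ (-(1 / R)) ∈ Set.Icc b 1 := by
      constructor
      · have h := Real.rpow_le_rpow_of_nonpos hy hyb
          (neg_nonpos.mpr (one_div_pos.mpr hR).le)
        rwa [← Real.rpow_mul hb0.le, show -R * -(1 / R) = 1 by field_simp, Real.rpow_one] at h
      · exact Real.rpow_le_one_of_one_le_of_nonpos hy1
          (neg_nonpos.mpr (one_div_pos.mpr hR).le)
    have hval : (y ^ (-(1 / R))) ^ (1 - R) / (1 - R) - y * y ^ (-(1 / R)) =
        -(y ^ (1 - 1 / R)) / (1 - 1 / R) := by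
      -- Both terms are multiples of `y ^ (1 - 1 / R)`, and `1 / (1 - R) - 1 = -1 / (1 - 1 / R)`.
      have h1 : (y ^ (-(1 / R))) ^ (1 - R) = y ^ (1 - 1 / R) := by
        rw [← Real.rpow_mul hy.le]
        congr 1
        field_simp
        ring
      have h2 : y * y ^ (-(1 / R)) = y ^ (1 - 1 / R) := by
        rw [sub_eq_add_neg, Real.rpow_add hy, Real.rpow_one]
      rw [h1, h2]
      have hR2 : 1 - R ≠ 0 := sub_ne_zero.mpr hR1.symm
      have hR3 : R - 1 ≠ 0 := sub_ne_zero.mpr hR1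
      have hR4 : 1 - 1 / R = (R - 1) / R := by field_simp
      generalize y ^ (1 - 1 / R) = z
      rw [hR4]
      field_simp
      ring
    refine ⟨?_, hmem, hval⟩
    rw [← hval]
    refine crra_isGreatest hR hR1 hb0 hmem (fun s _ => ?_)
    have hy' : (y ^ (-(1 / R))) ^ (-R) = y := by
      rw [← Real.rpow_mul hy.le, show -(1 / R) * -R = 1 by field_simp, Real.rpow_one]
    rw [hy', sub_self, zero_mul]
  · rw [mul_comm b y]
    exact crra_isGreatest hR hR1 hb0 hmemb (fun s hs =>
      mul_nonpos_of_nonpos_of_nonneg (by linarith) (by linarith [hs.1]))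
end

section
/- Let w : [0,∞) → ℝ be a continuous function with w(0) > 0, and let α ∈ [0,1). Define the running maximum w̄(t) = max_{0 ≤ s ≤ t} w(s) and the transformed path ŵ(t) = (w(t) − α·w̄(t))·w̄(t)^{α/(1−α)}. Then for every t ≥ 0, max_{0 ≤ s ≤ t} ŵ(s) = (1−α)·w̄(t)^{1/(1−α)}. -/
/-!
The value `ŵ(s)` is at most `(1-α) w̄(s)^{1/(1-α)}` because `w(s) ≤ w̄(s)` and
`w̄ · w̄^{α/(1-α)} = w̄^{1/(1-α)}`; this bound is nondecreasing in `s`. Equality with the bound at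
time `t` holds at a point `s₀ ∈ [0,t]` where `w` attains its maximum over `[0,t]`, since there
`w(s₀) = w̄(s₀) = w̄(t)`. So the right-hand side is the greatest element of the image.
-/

/-- Pathwise Cvitanić–Karatzas identity: for a continuous path `w` with `w(0) > 0` and
`α ∈ [0,1)`, the running maximum of `ŵ(s) = (w(s) − α·w̄(s))·w̄(s)^{α/(1−α)}` equals
`(1−α)·w̄(t)^{1/(1−α)}`, where `w̄` is the running maximum of `w`. -/
theorem running_max_transform (w : ℝ → ℝ) (hw : ContinuousOn w (Set.Ici 0))
    (hw0 : 0 < w 0) (α : ℝ) (hα0 : 0 ≤ α) (hα1 : α < 1) :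
    ∀ t : ℝ, 0 ≤ t →
      sSup ((fun s : ℝ =>
          (w s - α * sSup (w '' Set.Icc 0 s)) * sSup (w '' Set.Icc 0 s) ^ (α / (1 - α))) ''
        Set.Icc 0 t) =
      (1 - α) * sSup (w '' Set.Icc 0 t) ^ (1 / (1 - α)) := by
  intro t ht
  have bdd : ∀ s, BddAbove (w '' Set.Icc 0 s) := fun s =>
    (isCompact_Icc.image_of_continuousOn (hw.mono Set.Icc_subset_Ici_self)).bddAbove
  have le_max : ∀ r s, r ∈ Set.Icc 0 s → w r ≤ sSup (w '' Set.Icc 0 s) := fun r s hr =>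
    le_csSup (bdd s) (Set.mem_image_of_mem w hr)
  have max_pos : ∀ s, 0 ≤ s → 0 < sSup (w '' Set.Icc 0 s) := fun s hs =>
    hw0.trans_le (le_max 0 s ⟨le_rfl, hs⟩)
  have h1α : 0 < 1 - α := by linarith
  have key : ∀ x : ℝ, 0 < x →
      (x - α * x) * x ^ (α / (1 - α)) = (1 - α) * x ^ (1 / (1 - α)) := by
    intro x hx
    have e : 1 / (1 - α) = 1 + α / (1 - α) := by
      field_simp
      ring
    rw [e, Real.rpow_add hx, Real.rpow_one]
    ring
  refine IsGreatest.csSup_eq ⟨?_, ?_⟩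
  · obtain ⟨s₀, hs₀, hmax⟩ := isCompact_Icc.exists_isMaxOn (Set.nonempty_Icc.2 ht)
      (hw.mono Set.Icc_subset_Ici_self)
    have sup_eq : ∀ s, s₀ ≤ s → s ≤ t → sSup (w '' Set.Icc 0 s) = w s₀ := by
      intro s h₁ h₂
      refine IsGreatest.csSup_eq ⟨Set.mem_image_of_mem w ⟨hs₀.1, h₁⟩, ?_⟩
      rintro _ ⟨r, hr, rfl⟩
      exact hmax ⟨hr.1, hr.2.trans h₂⟩
    refine ⟨s₀, hs₀, ?_⟩
    have hpos := max_pos t ht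
    simp only [sup_eq s₀ le_rfl hs₀.2, sup_eq t hs₀.2 le_rfl] at hpos ⊢
    exact key _ hpos
  · rintro _ ⟨s, hs, rfl⟩
    have hpos := max_pos s hs.1
    have hmono : sSup (w '' Set.Icc 0 s) ≤ sSup (w '' Set.Icc 0 t) :=
      csSup_le_csSup (bdd t) ((Set.nonempty_Icc.2 hs.1).image w)
        (Set.image_mono (Set.Icc_subset_Icc_right hs.2))
    calc (w s - α * sSup (w '' Set.Icc 0 s)) * sSup (w '' Set.Icc 0 s) ^ (α / (1 - α))
        ≤ (sSup (w '' Set.Icc 0 s) - α * sSup (w '' Set.Icc 0 s)) *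
            sSup (w '' Set.Icc 0 s) ^ (α / (1 - α)) := by
          gcongr
          exact le_max s s ⟨hs.1, le_rfl⟩
      _ = (1 - α) * sSup (w '' Set.Icc 0 s) ^ (1 / (1 - α)) := key _ hpos
      _ ≤ (1 - α) * sSup (w '' Set.Icc 0 t) ^ (1 / (1 - α)) := by
          gcongr
end

section
/- Let r > 0, ρ > 0, κ ≠ 0, R > 0 with R ≠ 1, and 0 < b < 1 be real numbers, and suppose γ_M = (1/R)·(ρ − (1−R)·(r + κ²/(2R))) ≠ 0. Let −α and β, with α > 0 and β > 1, be the two roots of Q(t) = (κ²/2)·t·(t−1) + (ρ−r)·t − ρ. Set M = (β−1)/r − (1 + R(β−1))/(R·γ_M) and P = (R(α+1) − 1)/(R·γ_M) − (α+1)/r, and define h(z) = −(M/(α(α+β)))·z^{−α} − (P/(β(α+β)))·z^{β} − z/r + 1/((1−R)·ρ) + (1/γ_M)·z^{1−1/R}/(1−1/R) for z > 0. Then h(1) = 0, h'(1) = 0 and h''(1) = 0. -/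
/-!
The derivatives of `h` at `1` are computed termwise, so each of the three claims is a rational
identity between the parameters. The first- and second-order ones follow from
`M - P = (α + β) (1 / r - 1 / γM)` and `(α + 1) M + (β - 1) P = -(α + β) / (R γM)`, whatever the
roots are. The zeroth-order one uses Vieta's relations `κ² α β = 2 ρ` and
`κ² (β - α - 1) = 2 (r - ρ)` for the roots `-α`, `β`, together with the formula for `γM`:
`β M + α P = (α + β) ((β - α - 1) / r - (1 + R (β - α - 1)) / (R γM))`.
-/

/-- Termwise derivative of a combination of three real powers and a constant; three powers cover
`h` (whose linear term is a power with exponent `1`) and its derivative alike. -/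
theorem hasDerivAt_rpow_comb (a p b q c s d : ℝ) {z : ℝ} (hz : 0 < z) (l : ℝ) :
    HasDerivAt (fun z : ℝ => a * z ^ p + b * z ^ q + l * z + d + c * z ^ s)
      (a * p * z ^ (p - 1) + b * q * z ^ (q - 1) + l + c * s * z ^ (s - 1)) z := by
  have h1 := (Real.hasDerivAt_rpow_const (x := z) (p := p) (Or.inl hz.ne')).const_mul a
  have h2 := (Real.hasDerivAt_rpow_const (x := z) (p := q) (Or.inl hz.ne')).const_mul b
  have h3 := (Real.hasDerivAt_rpow_const (x := z) (p := s) (Or.inl hz.ne')).const_mul c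
  have h4 := (hasDerivAt_id z).const_mul l
  refine ((((h1.add h2).add h4).add_const d).add h3).congr_deriv ?_
  ring

theorem deriv_deriv_rpow_comb_one (a p b q c s d l : ℝ) :
    deriv (deriv (fun z : ℝ => a * z ^ p + b * z ^ q + l * z + d + c * z ^ s)) 1 =
      a * p * (p - 1) + b * q * (q - 1) + c * s * (s - 1) := by
  -- The first derivative is known only on `z > 0`, a neighbourhood of `1`.
  have he : deriv (fun z : ℝ => a * z ^ p + b * z ^ q + l * z + d + c * z ^ s) =ᶠ[nhds 1]
      fun z : ℝ => a * p * z ^ (p - 1) + b * q * z ^ (q - 1) + 0 * z + l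
        + c * s * z ^ (s - 1) := by
    filter_upwards [lt_mem_nhds (zero_lt_one' ℝ)] with z hz
    rw [(hasDerivAt_rpow_comb a p b q c s d hz l).deriv]
    ring
  rw [he.deriv_eq, (hasDerivAt_rpow_comb _ _ _ _ _ _ _ one_pos _).deriv]
  simp

/-- Smooth pasting (C²-matching) at `z = 1` of the two middle pieces of the dual value
function: the difference `h` of the two pieces vanishes to second order at `z = 1`. -/
theorem smooth_pasting_at_one (r ρ κ R b γM α β : ℝ)
    (hr : 0 < r) (hρ : 0 < ρ) (hκ : κ ≠ 0) (hR : 0 < R) (hR1 : R ≠ 1)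
    (hb0 : 0 < b) (hb1 : b < 1)
    (hγ : γM = 1 / R * (ρ - (1 - R) * (r + κ ^ 2 / (2 * R)))) (hγ0 : γM ≠ 0)
    (hα : 0 < α) (hβ : 1 < β)
    (hQα : κ ^ 2 / 2 * (-α) * (-α - 1) + (ρ - r) * (-α) - ρ = 0)
    (hQβ : κ ^ 2 / 2 * β * (β - 1) + (ρ - r) * β - ρ = 0) :
    let M := (β - 1) / r - (1 + R * (β - 1)) / (R * γM)
    let P := (R * (α + 1) - 1) / (R * γM) - (α + 1) / r
    let h : ℝ → ℝ := fun z =>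
      -(M / (α * (α + β))) * z ^ (-α) - P / (β * (α + β)) * z ^ β - z / r +
        1 / ((1 - R) * ρ) + 1 / γM * z ^ (1 - 1 / R) / (1 - 1 / R)
    h 1 = 0 ∧ deriv h 1 = 0 ∧ deriv (deriv h) 1 = 0 := by
  intro M P h
  have hβ0 : β ≠ 0 := by linarith
  have hα0 : α ≠ 0 := hα.ne'
  have hs : α + β ≠ 0 := by linarith
  have hr0 := hr.ne'
  have hρ0 := hρ.ne'
  have hR0 := hR.ne'
  have h1R : 1 - R ≠ 0 := sub_ne_zero.mpr hR1.symm
  have hR1' : R - 1 ≠ 0 := sub_ne_zero.mpr hR1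
  have hR2 : 1 - 1 / R ≠ 0 := by
    rw [one_sub_div hR0]
    exact div_ne_zero hR1' hR0
  have hfun : h = fun z : ℝ => -(M / (α * (α + β))) * z ^ (-α) + -(P / (β * (α + β))) * z ^ β
      + (-(1 / r)) * z + 1 / ((1 - R) * ρ) + (1 / γM / (1 - 1 / R)) * z ^ (1 - 1 / R) := by
    funext z
    simp only [h]
    ring
  have hMP : M - P = (α + β) * (1 / r - 1 / γM) := by
    simp only [M, P]
    field_simp
    ring
  have hMP2 : (α + 1) * M + (β - 1) * P = -(α + β) / (R * γM) := by
    simp only [M, P]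
    field_simp
    ring
  have hMP0 : β * M + α * P =
      (α + β) * ((β - α - 1) / r - (1 + R * (β - α - 1)) / (R * γM)) := by
    simp only [M, P]
    field_simp
    ring
  -- Vieta's relations; the difference of the two root equations is divisible by `α + β ≠ 0`.
  have hv1 : κ ^ 2 * (β - α - 1) = 2 * (r - ρ) := by
    apply mul_left_cancel₀ hs
    linear_combination 2 * hQβ - 2 * hQα
  have hv2 : κ ^ 2 * (α * β) = 2 * ρ := by
    linear_combination 2 * hQβ - β * hv1
  refine ⟨?_, ?_, ?_⟩
  · have e1 : h 1 = -(β * M + α * P) / (α * β * (α + β)) - 1 / r + 1 / ((1 - R) * ρ)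
        - R / (γM * (1 - R)) := by
      have e2 : 1 / γM / (1 - 1 / R) = - (R / (γM * (1 - R))) := by
        rw [one_sub_div hR0, ← neg_sub 1 R]
        field_simp
      rw [hfun]
      simp only [Real.one_rpow, e2]
      field_simp
      ring
    have hκ2 : κ ^ 2 ≠ 0 := pow_ne_zero 2 hκ
    have e3 : α * β = 2 * ρ / κ ^ 2 := by
      rw [eq_div_iff hκ2]
      linarith
    have e4 : β - α - 1 = 2 * (r - ρ) / κ ^ 2 := by
      rw [eq_div_iff hκ2]
      linarith
    have hγ' : 2 * R ^ 2 * γM = 2 * R * ρ - (1 - R) * (2 * R * r + κ ^ 2) := by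
      rw [hγ]
      field_simp
    rw [e1, hMP0, e3, e4]
    field_simp
    linear_combination r * hγ'
  · have e : deriv h 1 = (M - P) / (α + β) - 1 / r + 1 / γM := by
      rw [hfun, (hasDerivAt_rpow_comb _ _ _ _ _ _ _ one_pos _).deriv]
      simp only [Real.one_rpow, div_mul_cancel₀ _ hR2]
      field_simp
      ring
    rw [e, hMP]
    field_simp
    ring
  · have e : deriv (deriv h) 1 = -((α + 1) * M + (β - 1) * P) / (α + β) - 1 / (R * γM) := by
      rw [hfun, deriv_deriv_rpow_comb_one, div_mul_cancel₀ _ hR2]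
      field_simp
      ring
    rw [e, hMP2]
    field_simp
    ring
end

section
/- Let r > 0, ρ > 0, κ ≠ 0, R > 0 with R ≠ 1, and 0 < b < 1 be real numbers, and suppose γ_M = (1/R)·(ρ − (1−R)·(r + κ²/(2R))) ≠ 0. Let −α and β, with α > 0 and β > 1, be the two roots of Q(t) = (κ²/2)·t·(t−1) + (ρ−r)·t − ρ. Set M = (β−1)/r − (1 + R(β−1))/(R·γ_M) and P = (R(α+1) − 1)/(R·γ_M) − (α+1)/r, and define k(z) = (b^{1−R(α+1)}·M/(α(α+β)))·z^{−α} + (b^{1+R(β−1)}·P/(β(α+β)))·z^{β} − (1/γ_M)·z^{1−1/R}/(1−1/R) + (b/r)·z − b^{1−R}/((1−R)·ρ) for z > 0. Then k(b^{−R}) = 0, k'(b^{−R}) = 0 and k''(b^{−R}) = 0. -/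
/-!
At `z = b ^ (-R)` every power of `z`, multiplied by its coefficient, collapses to the same power of
`b`: `b ^ (1 - R)` in `k`, `b` in `k'` and `b ^ (1 + R)` in `k''`. Dividing by that common factor
leaves a rational identity in each case. For `k'` and `k''` it follows directly from the formulas
for `M` and `P`; for `k` it also uses Vieta's formulas for the roots `-α`, `β` of `Q`
(`vieta_sum`, `vieta_prod`) and the definition of `γM`.
-/

theorem hasDerivAt_const_mul_rpow (c p : ℝ) {z : ℝ} (hz : 0 < z) :
    HasDerivAt (fun y : ℝ => c * y ^ p) (c * p * z ^ (p - 1)) z := by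
  have h := (Real.hasDerivAt_rpow_const (p := p) (Or.inl hz.ne')).const_mul c
  rwa [← mul_assoc] at h

/-- Powers of `b` and of `z = b ^ (-R)` combine into a single power of `b`. -/
theorem rpow_mul_rpow_neg_rpow {b : ℝ} (hb : 0 < b) (R s p t : ℝ) (h : s - R * p = t) :
    b ^ s * (b ^ (-R)) ^ p = b ^ t := by
  rw [← Real.rpow_mul hb.le, ← Real.rpow_add hb, ← h]
  congr 1
  ring

/-- The sum of the roots of `Q`, in the form `κ² / 2 * (β - α - 1) = r - ρ`. -/
theorem vieta_sum {r ρ κ α β : ℝ} (hα : 0 < α) (hβ : 1 < β)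
    (hQα : κ ^ 2 / 2 * (-α) * (-α - 1) + (ρ - r) * (-α) - ρ = 0)
    (hQβ : κ ^ 2 / 2 * β * (β - 1) + (ρ - r) * β - ρ = 0) :
    κ ^ 2 / 2 * (β - α - 1) = r - ρ := by
  have h : α + β ≠ 0 := by linarith
  apply mul_left_cancel₀ h
  linear_combination hQβ - hQα

/-- The product of the roots of `Q`, in the form `κ² / 2 * (α * β) = ρ`. -/
theorem vieta_prod {r ρ κ α β : ℝ} (hα : 0 < α) (hβ : 1 < β)
    (hQα : κ ^ 2 / 2 * (-α) * (-α - 1) + (ρ - r) * (-α) - ρ = 0)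
    (hQβ : κ ^ 2 / 2 * β * (β - 1) + (ρ - r) * β - ρ = 0) :
    κ ^ 2 / 2 * (α * β) = ρ := by
  linear_combination hQβ - β * vieta_sum hα hβ hQα hQβ

/-- The condition `k (b ^ (-R)) = 0` after division by `b ^ (1 - R)`. -/
theorem value_identity {r ρ κ R γM α β : ℝ}
    (hr : 0 < r) (hρ : 0 < ρ) (hR : 0 < R) (hR1 : R ≠ 1)
    (hγ : γM = 1 / R * (ρ - (1 - R) * (r + κ ^ 2 / (2 * R)))) (hγ0 : γM ≠ 0)
    (hα : 0 < α) (hβ : 1 < β)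
    (hQα : κ ^ 2 / 2 * (-α) * (-α - 1) + (ρ - r) * (-α) - ρ = 0)
    (hQβ : κ ^ 2 / 2 * β * (β - 1) + (ρ - r) * β - ρ = 0) :
    ((β - 1) / r - (1 + R * (β - 1)) / (R * γM)) / (α * (α + β)) +
      ((R * (α + 1) - 1) / (R * γM) - (α + 1) / r) / (β * (α + β)) -
      1 / γM / (1 - 1 / R) + 1 / r - 1 / ((1 - R) * ρ) = 0 := by
  have h1 := vieta_sum hα hβ hQα hQβ
  have h2 := vieta_prod hα hβ hQα hQβ
  have hβ0 : β ≠ 0 := by linarith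
  have hαβ : α + β ≠ 0 := by linarith
  have hR2 : 1 - R ≠ 0 := sub_ne_zero.mpr hR1.symm
  have hR3 : R - 1 ≠ 0 := sub_ne_zero.mpr hR1
  have hκ2 : κ ^ 2 / 2 ≠ 0 := by
    intro h
    rw [h] at h2
    linarith
  have e1 : ((β - 1) / r - (1 + R * (β - 1)) / (R * γM)) / (α * (α + β)) +
      ((R * (α + 1) - 1) / (R * γM) - (α + 1) / r) / (β * (α + β)) =
      ((β - α - 1) / r - (1 + R * (β - α - 1)) / (R * γM)) / (α * β) := by
    field_simp
    ring
  have e2 : ((β - α - 1) / r - (1 + R * (β - α - 1)) / (R * γM)) / (α * β) =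
      ((r - ρ) / r - (κ ^ 2 / 2 + R * (r - ρ)) / (R * γM)) / ρ := by
    -- numerator and denominator are multiplied by `κ² / 2`
    rw [← mul_div_mul_left _ (α * β) hκ2, h2, ← h1]
    congr 1
    ring
  have e3 : 1 / γM / (1 - 1 / R) = R / (γM * (R - 1)) := by
    field_simp
  have hγ' : 2 * R ^ 2 * γM = 2 * R * ρ - (1 - R) * (2 * R * r + κ ^ 2) := by
    rw [hγ]
    field_simp
  have e4 : R / (γM * (R - 1)) = - (R / (γM * (1 - R))) := by
    rw [← neg_sub 1 R, mul_neg, div_neg]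
  rw [e1, e2, e3, e4]
  field_simp
  linear_combination (-r) * hγ'


/-- Smooth pasting (C²-matching) at `z = b^{−R}` of the last two pieces of the dual value
function: the difference `k` of the two pieces vanishes to second order at `z = b^{−R}`. -/
theorem smooth_pasting_at_b_pow (r ρ κ R b γM α β : ℝ)
    (hr : 0 < r) (hρ : 0 < ρ) (hκ : κ ≠ 0) (hR : 0 < R) (hR1 : R ≠ 1)
    (hb0 : 0 < b) (hb1 : b < 1)
    (hγ : γM = 1 / R * (ρ - (1 - R) * (r + κ ^ 2 / (2 * R)))) (hγ0 : γM ≠ 0)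
    (hα : 0 < α) (hβ : 1 < β)
    (hQα : κ ^ 2 / 2 * (-α) * (-α - 1) + (ρ - r) * (-α) - ρ = 0)
    (hQβ : κ ^ 2 / 2 * β * (β - 1) + (ρ - r) * β - ρ = 0) :
    let M := (β - 1) / r - (1 + R * (β - 1)) / (R * γM)
    let P := (R * (α + 1) - 1) / (R * γM) - (α + 1) / r
    let k : ℝ → ℝ := fun z =>
      b ^ (1 - R * (α + 1)) * M / (α * (α + β)) * z ^ (-α) +
        b ^ (1 + R * (β - 1)) * P / (β * (α + β)) * z ^ β -
        1 / γM * z ^ (1 - 1 / R) / (1 - 1 / R) + b / r * z -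
        b ^ (1 - R) / ((1 - R) * ρ)
    k (b ^ (-R)) = 0 ∧ deriv k (b ^ (-R)) = 0 ∧ deriv (deriv k) (b ^ (-R)) = 0 := by
  intro M P k
  have hβ0 : β ≠ 0 := by linarith
  have hαβ : α + β ≠ 0 := by linarith
  have hR2 : 1 - 1 / R ≠ 0 := by
    rw [sub_ne_zero, ne_eq, eq_div_iff hR.ne', one_mul]
    exact hR1
  have hz : 0 < b ^ (-R) := Real.rpow_pos_of_pos hb0 _
  set A := M / (α * (α + β)) with hA
  set B := P / (β * (α + β)) with hB
  set G := 1 / γM / (1 - 1 / R) with hG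
  set a := b ^ (1 - R * (α + 1)) with ha
  set c := b ^ (1 + R * (β - 1)) with hc
  have hk : k = fun z => a * A * z ^ (-α) + c * B * z ^ β - G * z ^ (1 - 1 / R) + b / r * z -
      b ^ (1 - R) / ((1 - R) * ρ) := by
    funext z
    simp only [k, hA, hB, hG]
    ring
  have hd1 : ∀ z : ℝ, 0 < z → HasDerivAt k (a * A * (-α) * z ^ (-α - 1) +
      c * B * β * z ^ (β - 1) - G * (1 - 1 / R) * z ^ (1 - 1 / R - 1) + b / r) z := by
    intro z hz
    have hlin : HasDerivAt (fun y : ℝ => b / r * y) (b / r) z := by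
      simpa using (hasDerivAt_id z).const_mul (b / r)
    rw [hk]
    exact ((((hasDerivAt_const_mul_rpow _ _ hz).add (hasDerivAt_const_mul_rpow _ _ hz)).sub
      (hasDerivAt_const_mul_rpow _ _ hz)).add hlin).sub_const _
  have hd2 : HasDerivAt (deriv k) (a * A * (-α) * (-α - 1) * (b ^ (-R)) ^ (-α - 1 - 1) +
      c * B * β * (β - 1) * (b ^ (-R)) ^ (β - 1 - 1) -
      G * (1 - 1 / R) * (1 - 1 / R - 1) * (b ^ (-R)) ^ (1 - 1 / R - 1 - 1)) (b ^ (-R)) := by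
    refine HasDerivAt.congr_of_eventuallyEq ((((hasDerivAt_const_mul_rpow _ _ hz).add
      (hasDerivAt_const_mul_rpow _ _ hz)).sub
      (hasDerivAt_const_mul_rpow _ _ hz)).add_const (b / r)) ?_
    filter_upwards [lt_mem_nhds hz] with z hz
    exact (hd1 z hz).deriv
  have hpow : ∀ p t : ℝ, -(R * p) = t → (b ^ (-R)) ^ p = b ^ t := by
    intro p t h
    rw [← Real.rpow_mul hb0.le, ← h, neg_mul]
  refine ⟨?_, ?_, ?_⟩
  · have h1 : a * (b ^ (-R)) ^ (-α) = b ^ (1 - R) :=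
      rpow_mul_rpow_neg_rpow hb0 _ _ _ _ (by ring)
    have h2 : c * (b ^ (-R)) ^ β = b ^ (1 - R) :=
      rpow_mul_rpow_neg_rpow hb0 _ _ _ _ (by ring)
    have h3 : (b ^ (-R)) ^ (1 - 1 / R) = b ^ (1 - R) := hpow _ _ (by field_simp; ring)
    have h4 : b * b ^ (-R) = b ^ (1 - R) := by
      rw [sub_eq_add_neg, Real.rpow_add hb0, Real.rpow_one]
    have key : A + B - G + 1 / r - 1 / ((1 - R) * ρ) = 0 :=
      value_identity hr hρ hR hR1 hγ hγ0 hα hβ hQα hQβ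
    rw [hk]
    linear_combination A * h1 + B * h2 - G * h3 + 1 / r * h4 + b ^ (1 - R) * key
  · have h1 : a * (b ^ (-R)) ^ (-α - 1) = b :=
      (rpow_mul_rpow_neg_rpow hb0 _ _ _ 1 (by ring)).trans (Real.rpow_one b)
    have h2 : c * (b ^ (-R)) ^ (β - 1) = b :=
      (rpow_mul_rpow_neg_rpow hb0 _ _ _ 1 (by ring)).trans (Real.rpow_one b)
    have h3 : (b ^ (-R)) ^ (1 - 1 / R - 1) = b :=
      (hpow _ 1 (by field_simp; ring)).trans (Real.rpow_one b)
    have key : -(A * α) + B * β - G * (1 - 1 / R) + 1 / r = 0 := by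
      rw [hG, div_mul_cancel₀ _ hR2]
      simp only [hA, hB, M, P]
      field_simp
      ring
    rw [(hd1 _ hz).deriv]
    linear_combination -(A * α) * h1 + B * β * h2 - G * (1 - 1 / R) * h3 + b * key
  · have h1 : a * (b ^ (-R)) ^ (-α - 1 - 1) = b ^ (1 + R) :=
      rpow_mul_rpow_neg_rpow hb0 _ _ _ _ (by ring)
    have h2 : c * (b ^ (-R)) ^ (β - 1 - 1) = b ^ (1 + R) :=
      rpow_mul_rpow_neg_rpow hb0 _ _ _ _ (by ring)
    have h3 : (b ^ (-R)) ^ (1 - 1 / R - 1 - 1) = b ^ (1 + R) := hpow _ _ (by field_simp; ring)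
    have key : A * α * (α + 1) + B * β * (β - 1) - G * (1 - 1 / R) * (1 - 1 / R - 1) = 0 := by
      rw [hG, div_mul_cancel₀ _ hR2]
      simp only [hA, hB, M, P]
      field_simp
      ring
    rw [hd2.deriv]
    linear_combination A * α * (α + 1) * h1 + B * β * (β - 1) * h2 -
      G * (1 - 1 / R) * (1 - 1 / R - 1) * h3 + b ^ (1 + R) * key
end
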